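/- For every integer n ≥ 4 with n ≡ 1 or 2 (mod 3), h(n,4) = n + 1. -/

import Mathlib

/-!
A graph has `mp G ≥ 4` exactly when some path `a, b, c, e` has non-decreasing degrees, and adding an
edge `uv` raises the degrees of `u` and `v` by one; so `4`-saturation is a condition `Sat4` on
adjacency and degrees (`kSaturated_iff`).

Lower bound (`lower_bound`). Let `u` have maximum degree `Δ` in a `4`-saturated graph on `n ≥ 4`
vertices with `3 ∤ n`. Joining a vertex of degree at most one to `u` creates few monotone paths, as
the raised degree of `u` exceeds all other unchanged ones. This shows that no vertex is isolated
(`no_isolated`), that every leaf is adjacent to `u` (`leaf_adj_max`, where path components have to be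
excluded by adding an edge inside them), and that there is at most one leaf (`leaf_unique`). It remains
to see that the degree sum exceeds `2n`, since it is even and so is then at least `2n + 2`.
Without leaves it is at least `2n`, with equality only for a disjoint union of triangles
(`three_dvd_of_two_regular`), which `3 ∤ n` excludes. With one leaf, `Δ ≥ 3` and the sum is at least
`1 + Δ + 2(n - 2)`, which is at most `2n` only if `Δ = 3` and all other degrees are `2`; this is
excluded by `no_paw`.

Upper bound (`exists_saturated`). Adding disjoint triangles to a `4`-saturated graph of minimum
degree at least two preserves saturation: an edge leaving a triangle creates a path with degrees
`2, 2, 3, d` with `d ≥ 3`. The starting graphs are `K₄` minus an edge for `n ≡ 1` and two triangles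
sharing a vertex for `n ≡ 2` modulo `3`.
-/

open SimpleGraph

variable {V : Type*}

/-- The degree of a vertex `v`: the number of neighbours of `v`. -/
noncomputable def gdeg (G : SimpleGraph V) (v : V) : ℕ := (G.neighborSet v).ncard

/-- A walk is degree monotone if the sequence of degrees of the vertices in the
order in which they appear on the walk is monotone (non-decreasing or non-increasing). -/
def IsDegMonotone (G : SimpleGraph V) {u v : V} (p : G.Walk u v) : Prop :=
  (p.support.map (gdeg G)).Chain' (· ≤ ·) ∨ (p.support.map (gdeg G)).Chain' (· ≥ ·)

/-- `mp G` is the maximum number of vertices of a degree monotone path in `G`. -/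
noncomputable def mp (G : SimpleGraph V) : ℕ :=
  sSup {n | ∃ (u v : V) (p : G.Walk u v), p.IsPath ∧ IsDegMonotone G p ∧ p.support.length = n}

/-- The graph obtained from `G` by adding the edge `uv`. -/
def addEdge (G : SimpleGraph V) (u v : V) : SimpleGraph V :=
  G ⊔ fromEdgeSet {s(u, v)}

/-- `G` is saturated if adding any edge between non-adjacent vertices increases `mp`. -/
def Saturated (G : SimpleGraph V) : Prop :=
  ∀ u v : V, u ≠ v → ¬ G.Adj u v → mp G < mp (addEdge G u v)

/-- `G` is `k`-saturated if `mp G < k` and adding any edge between non-adjacent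
vertices creates a degree monotone path on at least `k` vertices. -/
def KSaturated (k : ℕ) (G : SimpleGraph V) : Prop :=
  mp G < k ∧ ∀ u v : V, u ≠ v → ¬ G.Adj u v → k ≤ mp (addEdge G u v)

/-- `hSat n k` is the minimum number of edges of a `k`-saturated graph on `n` vertices. -/
noncomputable def hSat (n k : ℕ) : ℕ :=
  sInf {m | ∃ G : SimpleGraph (Fin n), KSaturated k G ∧ G.edgeSet.ncard = m}

/-! ### Monotone paths on four vertices -/

/-- There is a path `a, b, c, e` of the relation `A` along which `d` is non-decreasing. That
consecutive vertices are distinct is left out: it is automatic when `A` is irreflexive. -/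
def Mono4 (A : V → V → Prop) (d : V → ℕ) : Prop :=
  ∃ a b c e, A a b ∧ A b c ∧ A c e ∧ a ≠ c ∧ a ≠ e ∧ b ≠ e ∧ d a ≤ d b ∧ d b ≤ d c ∧ d c ≤ d e

/-- The adjacency relation `A` with the edge `uv` added. -/
def NewAdj (A : V → V → Prop) (u v : V) (a b : V) : Prop :=
  A a b ∨ (a = u ∧ b = v) ∨ (a = v ∧ b = u)

open Classical in
/-- The degree function `d` updated for the addition of an edge `uv`. -/
noncomputable def newDeg (d : V → ℕ) (u v : V) (w : V) : ℕ :=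
  d w + if w = u ∨ w = v then 1 else 0

/-- `4`-saturation in terms of adjacency and degrees only. -/
def Sat4 (A : V → V → Prop) (d : V → ℕ) : Prop :=
  ¬ Mono4 A d ∧ ∀ u v, u ≠ v → ¬ A u v → Mono4 (NewAdj A u v) (newDeg d u v)

/-- A longer monotone path starts with one on four vertices, and a non-increasing path is
non-decreasing when reversed. -/
lemma four_le_mp_iff [Finite V] (G : SimpleGraph V) : 4 ≤ mp G ↔ Mono4 G.Adj (gdeg G) := by
  have hbdd : BddAbove {n | ∃ (u v : V) (p : G.Walk u v),
      p.IsPath ∧ IsDegMonotone G p ∧ p.support.length = n} := by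
    have := Fintype.ofFinite V
    refine ⟨Fintype.card V, ?_⟩
    rintro n ⟨u, v, p, hp, -, rfl⟩
    exact hp.support_nodup.length_le_card
  constructor
  · intro h
    have hne : {n | ∃ (u v : V) (p : G.Walk u v),
        p.IsPath ∧ IsDegMonotone G p ∧ p.support.length = n}.Nonempty := by
      by_contra hne
      rw [Set.not_nonempty_iff_eq_empty] at hne
      rw [mp, hne] at h
      simp at h
    obtain ⟨u, v, p, hp, hm, hl⟩ := Nat.sSup_mem hne hbdd
    change _ = mp G at hl
    have hnd := hp.support_nodup
    unfold IsDegMonotone at hm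
    rw [← hl] at h
    clear hl hp hne hbdd
    rcases p with _ | ⟨h1, _ | ⟨h2, _ | ⟨h3, p⟩⟩⟩
    · simp at h
    · simp at h
    · simp at h
    · rw [SimpleGraph.Walk.support_cons, SimpleGraph.Walk.support_cons,
        SimpleGraph.Walk.support_cons, ← SimpleGraph.Walk.cons_tail_support] at hnd hm
      simp only [List.map_cons, List.Chain', List.isChain_cons_cons] at hm
      simp only [List.nodup_cons, List.mem_cons, not_or] at hnd
      obtain ⟨⟨h12, h13, h14, -⟩, ⟨h23, h24, -⟩, -⟩ := hnd
      rcases hm with ⟨m1, m2, m3, -⟩ | ⟨m1, m2, m3, -⟩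
      · exact ⟨_, _, _, _, h1, h2, h3, h13, h14, h24, m1, m2, m3⟩
      · exact ⟨_, _, _, _, h3.symm, h2.symm, h1.symm, Ne.symm h24, Ne.symm h14, Ne.symm h13,
          m3, m2, m1⟩
  · rintro ⟨a, b, c, e, h1, h2, h3, h13, h14, h24, m1, m2, m3⟩
    refine le_csSup hbdd ⟨a, e, .cons h1 (.cons h2 (.cons h3 .nil)), ?_, ?_, ?_⟩
    · simp [SimpleGraph.Walk.isPath_def, h1.ne, h2.ne, h3.ne, h13, h14, h24]
    · left
      simp [List.Chain', m1, m2, m3]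
    · simp

lemma addEdge_adj (G : SimpleGraph V) {u v : V} (huv : u ≠ v) :
    (addEdge G u v).Adj = NewAdj G.Adj u v := by
  ext a b
  simp only [addEdge, NewAdj, SimpleGraph.sup_adj, SimpleGraph.fromEdgeSet_adj]
  simp
  grind

lemma gdeg_addEdge [Finite V] (G : SimpleGraph V) {u v : V} (huv : u ≠ v) (h : ¬ G.Adj u v) :
    gdeg (addEdge G u v) = newDeg (gdeg G) u v := by
  ext w
  have hA : ∀ b, b ∈ (addEdge G u v).neighborSet w ↔ NewAdj G.Adj u v w b := by
    intro b
    rw [SimpleGraph.mem_neighborSet, addEdge_adj G huv]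
  have hvu : ¬ G.Adj v u := fun h' => h h'.symm
  unfold newDeg gdeg
  by_cases hwu : w = u
  · subst hwu
    have : (addEdge G w v).neighborSet w = insert v (G.neighborSet w) := by
      ext b; rw [hA]; simp [NewAdj]; grind
    rw [this, Set.ncard_insert_of_notMem (by simpa using h)]
    simp
  by_cases hwv : w = v
  · subst hwv
    have : (addEdge G u w).neighborSet w = insert u (G.neighborSet w) := by
      ext b; rw [hA]; simp [NewAdj]; grind
    rw [this, Set.ncard_insert_of_notMem (by simpa using hvu)]
    simp
  · have : (addEdge G u v).neighborSet w = G.neighborSet w := by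
      ext b; rw [hA]; simp [NewAdj]; grind
    rw [this]; simp [hwu, hwv]

lemma kSaturated_iff [Finite V] (G : SimpleGraph V) :
    KSaturated 4 G ↔ Sat4 G.Adj (gdeg G) := by
  unfold KSaturated Sat4
  rw [← not_le, four_le_mp_iff]
  refine and_congr Iff.rfl (forall_congr' fun u => forall_congr' fun v => forall_congr' fun huv =>
    forall_congr' fun h => ?_)
  rw [four_le_mp_iff, addEdge_adj G huv, gdeg_addEdge G huv h]

/-! ### Vertices of small degree in a saturated graph -/

section lower
variable [Finite V] {G : SimpleGraph V} 

omit [Finite V] in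
lemma exists_nbr_of_gdeg_one {x : V} (h : gdeg G x = 1) : ∃ y, ∀ z, G.Adj x z ↔ z = y := by
  obtain ⟨y, hy⟩ := Set.ncard_eq_one.1 h
  exact ⟨y, fun z => by rw [← SimpleGraph.mem_neighborSet, hy]; simp⟩

omit [Finite V] in
lemma exists_nbrs_of_gdeg_two {x : V} (h : gdeg G x = 2) :
    ∃ y z, y ≠ z ∧ ∀ w, G.Adj x w ↔ w = y ∨ w = z := by
  obtain ⟨y, z, hne, hy⟩ := Set.ncard_eq_two.1 h
  exact ⟨y, z, hne, fun w => by rw [← SimpleGraph.mem_neighborSet, hy]; simp⟩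

lemma not_adj_of_gdeg_zero {x : V} (h : gdeg G x = 0) (z : V) : ¬ G.Adj x z := by
  have := (Set.ncard_eq_zero).1 h
  rw [← SimpleGraph.mem_neighborSet, this]; simp

lemma gdeg_pos_of_adj {x z : V} (h : G.Adj x z) : 0 < gdeg G x := by
  by_contra h0
  exact not_adj_of_gdeg_zero (by omega) z h


lemma Sat4.forbid (hs : Sat4 G.Adj (gdeg G)) : ∀ a b c e, G.Adj a b → G.Adj b c → G.Adj c e →
    a ≠ c → a ≠ e → b ≠ e → gdeg G a ≤ gdeg G b → gdeg G b ≤ gdeg G c →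
    gdeg G c ≤ gdeg G e → False :=
  fun a b c e h1 h2 h3 h4 h5 h6 h7 h8 h9 => hs.1 ⟨a, b, c, e, h1, h2, h3, h4, h5, h6, h7, h8, h9⟩

lemma Sat4.exists_path (hs : Sat4 G.Adj (gdeg G)) {u v : V} (huv : u ≠ v) (hn : ¬ G.Adj u v) :
    ∃ a b c e, (G.Adj a b ∨ (a = u ∧ b = v) ∨ (a = v ∧ b = u)) ∧
      (G.Adj b c ∨ (b = u ∧ c = v) ∨ (b = v ∧ c = u)) ∧
      (G.Adj c e ∨ (c = u ∧ e = v) ∨ (c = v ∧ e = u)) ∧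
      (a ≠ b ∧ b ≠ c ∧ c ≠ e ∧ a ≠ c ∧ a ≠ e ∧ b ≠ e) ∧
      newDeg (gdeg G) u v a ≤ newDeg (gdeg G) u v b ∧
      newDeg (gdeg G) u v b ≤ newDeg (gdeg G) u v c ∧
      newDeg (gdeg G) u v c ≤ newDeg (gdeg G) u v e := by
  obtain ⟨a, b, c, e, h1, h2, h3, h13, h14, h24, m1, m2, m3⟩ := hs.2 u v huv hn
  refine ⟨a, b, c, e, h1, h2, h3, ⟨?_, ?_, ?_, h13, h14, h24⟩, m1, m2, m3⟩
  all_goals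
    rintro rfl
    simp only [NewAdj, SimpleGraph.irrefl] at h1 h2 h3
    grind

lemma two_le_gdeg {p q r : V} (h1 : G.Adj p q) (h2 : G.Adj p r) (h : q ≠ r) :
    2 ≤ gdeg G p := by
  have : ({q, r} : Set V) ⊆ G.neighborSet p := by
    rintro z (rfl | rfl) <;> assumption
  rw [← Set.ncard_pair h]
  exact Set.ncard_le_ncard this

/-- Joining an isolated vertex to a vertex `u` of maximum degree makes `u` the unique vertex of
maximum degree (unless `G` has no edges), so a new monotone path would end at `u` and be monotone in `G` already. -/
lemma no_isolated (hs : Sat4 G.Adj (gdeg G)) {x u : V} (hu : ∀ v, gdeg G v ≤ gdeg G u)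
    (hxu : x ≠ u) : gdeg G x ≠ 0 := by
  intro h
  have hx := not_adj_of_gdeg_zero h
  obtain ⟨a, b, c, e, h1, h2, h3, hne, m1, m2, m3⟩ := hs.exists_path hxu (hx u)
  have hsym : ∀ p q, G.Adj p q → G.Adj q p := fun p q h => h.symm
  have := hs.forbid a b c e
  have ha := hu a
  have hb := hu b
  have hc := hu c
  have he := hu e
  have hpos : G.Adj u b → 0 < gdeg G u := gdeg_pos_of_adj
  clear hs hu
  simp only [newDeg] at *
  grind

/-- Joining a leaf `x` to a vertex `u` of maximum degree can only create a monotone path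
`a, y, x, u` (up to a path component on four vertices), which forces `y` and `a` to have degree at
most `2`. -/
lemma leaf_step (hs : Sat4 G.Adj (gdeg G)) {x y u : V} (hu : ∀ v, gdeg G v ≤ gdeg G u)
    (hxu : x ≠ u) (hx : ∀ z, G.Adj x z ↔ z = y) (hdx : gdeg G x = 1) (hadj : ¬ G.Adj x u)
    (hu2 : 2 ≤ gdeg G u) :
    gdeg G y = 2 ∧ ∃ a, a ≠ x ∧ G.Adj y a ∧ gdeg G a ≤ 2 := by
  obtain ⟨a, b, c, e, h1, h2, h3, hne, m1, m2, m3⟩ := hs.exists_path hxu hadj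
  have hsym : ∀ p q, G.Adj p q → G.Adj q p := fun p q h => h.symm
  have := hs.forbid a b c e
  have this' := hs.forbid e c b a
  have ha := hu a
  have hb := hu b
  have hc := hu c
  have he := hu e
  have hpos : ∀ p q, G.Adj p q → 0 < gdeg G p := fun p q h => gdeg_pos_of_adj h
  have htwo : ∀ p q r, G.Adj p q → G.Adj p r → q ≠ r → 2 ≤ gdeg G p :=
    fun p q r => two_le_gdeg
  clear hs hu
  simp only [newDeg] at *
  by_contra hcon
  have hcon' : ∀ a, gdeg G y = 2 → a ≠ x → G.Adj y a → ¬ gdeg G a ≤ 2 :=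
    fun a h1 h2 h3 h4 => hcon ⟨h1, a, h2, h3, h4⟩
  clear hcon
  grind

lemma exists_other_nbr {x y : V} (h : gdeg G x = 2) (hxy : G.Adj x y) :
    ∃ z, z ≠ y ∧ ∀ w, G.Adj x w ↔ w = y ∨ w = z := by
  obtain ⟨p, q, hpq, hx⟩ := exists_nbrs_of_gdeg_two h
  rcases (hx y).1 hxy with rfl | rfl
  · exact ⟨q, hpq.symm, hx⟩
  · exact ⟨p, hpq, fun w => (hx w).trans or_comm⟩

/-- A path `x, y, a` cannot be a component: joining its ends gives a triangle. -/
lemma no_P3 (hs : Sat4 G.Adj (gdeg G)) {x y a : V} (hxa : x ≠ a)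
    (hx : ∀ z, G.Adj x z ↔ z = y) (hy : ∀ z, G.Adj y z ↔ z = x ∨ z = a)
    (ha : ∀ z, G.Adj a z ↔ z = y) : False := by
  have hya : y ≠ a := ((hy a).2 (Or.inr rfl)).ne
  have hadj : ¬ G.Adj x a := by grind
  obtain ⟨p, q, r, s, h1, h2, h3, hne, m1, m2, m3⟩ := hs.exists_path hxa hadj
  have hsym : ∀ p q, G.Adj p q → G.Adj q p := fun p q h => h.symm
  have := hs.forbid p q r s
  clear hs
  simp only [newDeg] at *
  grind

/-- A path `x, y, a, b` cannot be a component: joining `x` to `a` gives a triangle with a pendant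
edge, which has no monotone path on four vertices. -/
lemma no_P4 (hs : Sat4 G.Adj (gdeg G)) {x y a b : V} (hxa : x ≠ a)
    (hx : ∀ z, G.Adj x z ↔ z = y) (hy : ∀ z, G.Adj y z ↔ z = x ∨ z = a)
    (ha : ∀ z, G.Adj a z ↔ z = y ∨ z = b)
    (hb : ∀ z, G.Adj b z ↔ z = a) (hdx : gdeg G x = 1) (hdy : gdeg G y = 2)
    (hda : gdeg G a = 2) (hdb : gdeg G b = 1) : False := by
  have hya : y ≠ a := ((hy a).2 (Or.inr rfl)).ne
  have hadj : ¬ G.Adj x a := by grind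
  obtain ⟨p, q, r, s, h1, h2, h3, hne, m1, m2, m3⟩ := hs.exists_path hxa hadj
  have hsym : ∀ p q, G.Adj p q → G.Adj q p := fun p q h => h.symm
  have := hs.forbid p q r s
  clear hs
  simp only [newDeg] at *
  grind

lemma leaf_adj_max (hs : Sat4 G.Adj (gdeg G)) {x u : V} (hu : ∀ v, gdeg G v ≤ gdeg G u)
    (hu2 : 2 ≤ gdeg G u) (hdx : gdeg G x = 1) (hxu : x ≠ u) : G.Adj x u := by
  by_contra hadj
  have hirr : ∀ p, ¬ G.Adj p p := fun p => G.irrefl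
  have hsym : ∀ p q, G.Adj p q → G.Adj q p := fun p q h => h.symm
  obtain ⟨y, hx⟩ := exists_nbr_of_gdeg_one hdx
  obtain ⟨hdy, a, hax, hya, hda⟩ := leaf_step hs hu hxu hx hdx hadj hu2
  have hy : ∀ z, G.Adj y z ↔ z = x ∨ z = a := by
    obtain ⟨p, q, hpq, hy⟩ := exists_nbrs_of_gdeg_two hdy
    have := (hy x).1 (hsym _ _ ((hx y).2 rfl))
    have := (hy a).1 hya
    grind
  have hda0 := gdeg_pos_of_adj (hsym _ _ hya)
  obtain hda1 | hda2 : gdeg G a = 1 ∨ gdeg G a = 2 := by omega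
  · obtain ⟨y', ha⟩ := exists_nbr_of_gdeg_one hda1
    obtain rfl := (ha y).1 (hsym _ _ hya)
    exact no_P3 hs hax.symm hx hy ha
  · obtain ⟨b, hby, ha⟩ := exists_other_nbr hda2 (hsym _ _ hya)
    have hab : G.Adj a b := (ha b).2 (Or.inr rfl)
    have hbx : b ≠ x := by grind
    have hdb : gdeg G b = 1 := by
      have h1 := gdeg_pos_of_adj (hsym _ _ hab)
      by_contra hcon
      exact hs.forbid x y a b ((hx y).2 rfl) hya hab hax.symm hbx.symm hby.symm
        (by omega) (by omega) (by omega)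
    obtain ⟨a', hb⟩ := exists_nbr_of_gdeg_one hdb
    obtain rfl := (hb a).1 (hsym _ _ hab)
    exact no_P4 hs hax.symm hx hy ha hb hdx hdy hda2 hdb

/-- Two leaves would hang on the unique vertex `u` of maximum degree. Once they are joined, a monotone
path on four vertices through them would have to leave through `u` to a vertex of degree at least
that of `u`. -/
lemma leaf_unique (hs : Sat4 G.Adj (gdeg G)) {x x' u : V} (hu : ∀ v, gdeg G v ≤ gdeg G u)
    (hu2 : 2 ≤ gdeg G u) (hdx : gdeg G x = 1) (hdx' : gdeg G x' = 1) : x = x' := by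
  by_contra hxx
  have hirr : ∀ p, ¬ G.Adj p p := fun p => G.irrefl
  have hsym : ∀ p q, G.Adj p q → G.Adj q p := fun p q h => h.symm
  obtain ⟨y, hx⟩ := exists_nbr_of_gdeg_one hdx
  obtain ⟨y', hx'⟩ := exists_nbr_of_gdeg_one hdx'
  obtain rfl := (hx u).1 (leaf_adj_max hs hu hu2 hdx (by rintro rfl; omega))
  obtain rfl := (hx' u).1 (leaf_adj_max hs hu hu2 hdx' (by rintro rfl; omega))
  have hmax : ∀ w, gdeg G w = gdeg G u → w = u := by
    intro w hw
    have := leaf_adj_max (u := w) hs (by simpa [hw] using hu) (by omega) hdx (by rintro rfl; omega)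
    exact (hx w).1 this
  have hadj : ¬ G.Adj x x' := by grind
  have h2 : gdeg G u = 2 → ∀ z, G.Adj u z → z = x ∨ z = x' := by
    intro h z hz
    obtain ⟨p, q, hpq, hy⟩ := exists_nbrs_of_gdeg_two h
    have := (hy x).1 (hsym _ _ ((hx u).2 rfl))
    have := (hy x').1 (hsym _ _ ((hx' u).2 rfl))
    have := (hy z).1 hz
    grind
  obtain ⟨p, q, r, s, h1, h2, h3, hne, m1, m2, m3⟩ := hs.exists_path hxx hadj
  have := hs.forbid p q r s
  have hp := hu p
  have hq := hu q
  have hr := hu r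
  have hs' := hu s
  have hp' := hmax p
  have hq' := hmax q
  have hr' := hmax r
  have hs'' := hmax s
  clear hs hu hmax
  simp only [newDeg] at *
  grind

/-- If all degrees are `2` except for a leaf `x` and its neighbour `u` of degree `3`, then the
component of `u` is a triangle with a pendant edge; joining `x` to a vertex of degree `2` turns it
into `K₄` minus an edge, which has no monotone path on four vertices. -/
lemma no_paw (hs : Sat4 G.Adj (gdeg G)) {x u : V} (hdu : gdeg G u = 3)
    (hx : ∀ z, G.Adj x z ↔ z = u) (hdx : gdeg G x = 1)
    (hrest : ∀ v, v ≠ x → v ≠ u → gdeg G v = 2) : False := by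
  have hirr : ∀ p, ¬ G.Adj p p := fun p => G.irrefl
  have hsym : ∀ p q, G.Adj p q → G.Adj q p := fun p q h => h.symm
  have hxu := (hx u).2 rfl
  obtain ⟨a, hax, hua⟩ : ∃ a, a ≠ x ∧ G.Adj u a := by
    by_contra hcon
    push Not at hcon
    have : G.neighborSet u ⊆ {x} := by
      intro z hz
      by_contra hzx
      exact hcon z hzx hz
    have := Set.ncard_le_ncard this
    rw [Set.ncard_singleton] at this
    unfold gdeg at hdu
    omega
  have hau : a ≠ u := by grind
  have hda := hrest a hax hau
  obtain ⟨b, hbu, ha⟩ := exists_other_nbr hda (hsym _ _ hua)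
  have hab := (ha b).2 (Or.inr rfl)
  have hbx : b ≠ x := by grind
  have hdb := hrest b hbx hbu
  obtain ⟨c, hca, hb⟩ := exists_other_nbr hdb (hsym _ _ hab)
  have hbc := (hb c).2 (Or.inr rfl)
  have hcx : c ≠ x := by grind
  have hcu : c = u := by
    by_contra hcu
    have hdc := hrest c hcx hcu
    exact hs.forbid c b a u hbc.symm hab.symm hua.symm hca hcu hbu (by omega) (by omega)
      (by omega)
  subst hcu
  have hu : ∀ z, G.Adj c z ↔ z = x ∨ z = a ∨ z = b := by
    obtain ⟨p, q, r, -, -, -, h⟩ := Set.ncard_eq_three.1 hdu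
    have h' : ∀ z, G.Adj c z ↔ z = p ∨ z = q ∨ z = r := fun z => by
      rw [← SimpleGraph.mem_neighborSet, h]; simp
    have := (h' x).1 hxu.symm
    have := (h' a).1 hua
    have := (h' b).1 hbc.symm
    intro z
    have := hirr b
    grind
  have hadj : ¬ G.Adj x a := by grind
  obtain ⟨p, q, r, s, h1, h2, h3, hne, m1, m2, m3⟩ := hs.exists_path hax.symm hadj
  have := hs.forbid p q r s
  clear hs hrest
  simp only [newDeg] at *
  grind

lemma two_le_max (hs : Sat4 G.Adj (gdeg G)) (hcard : 4 ≤ Nat.card V) {u : V}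
    (hu : ∀ v, gdeg G v ≤ gdeg G u) (hpos : ∀ v, gdeg G v ≠ 0) : 2 ≤ gdeg G u := by
  by_contra hcon
  have hone : ∀ v, gdeg G v = 1 := fun v => by
    have := hu v
    have := hpos v
    omega
  obtain ⟨y, hy⟩ := exists_nbr_of_gdeg_one (hone u)
  obtain ⟨x, hx⟩ : ∃ x, x ∉ ({u, y} : Set V) := by
    by_contra hall
    push Not at hall
    have h1 : ({u, y} : Set V) = Set.univ := Set.eq_univ_of_forall hall
    have h2 := Set.ncard_pair ((hy y).2 rfl).ne
    rw [h1, Set.ncard_univ] at h2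
    omega
  simp only [Set.mem_insert_iff, Set.mem_singleton_iff, not_or] at hx
  have hadj : ¬ G.Adj u x := fun h => hx.2 ((hy x).1 h)
  obtain ⟨p, q, r, s, h1, h2, h3, hne, m1, m2, m3⟩ := hs.exists_path (Ne.symm hx.1) hadj
  have hsym : ∀ p q, G.Adj p q → G.Adj q p := fun p q h => h.symm
  have htwo : ∀ p q r, G.Adj p q → G.Adj p r → q = r := fun p q r h1 h2 => by
    by_contra hqr
    have := two_le_gdeg h1 h2 hqr
    have := hone p
    omega
  have t1 := htwo q p r
  have t2 := htwo r q s
  simp only [newDeg, hone] at m1 m2 m3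
  clear hs hu hpos
  grind

lemma gdeg_pos_of_sat (hs : Sat4 G.Adj (gdeg G)) (hcard : 4 ≤ Nat.card V) {u : V}
    (hu : ∀ v, gdeg G v ≤ gdeg G u) (x : V) : gdeg G x ≠ 0 := by
  by_cases hxu : x = u
  · subst hxu
    intro h0
    have : Nontrivial V := (Finite.one_lt_card_iff_nontrivial).1 (by omega)
    obtain ⟨y, hy⟩ := exists_ne x
    exact no_isolated hs hu hy (by have := hu y; omega)
  · exact no_isolated hs hu hxu

/-- In a `2`-regular graph all paths are monotone, so the components are triangles: being equal or
adjacent is an equivalence relation with classes of size `3`. -/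
lemma three_dvd_of_two_regular (hs : Sat4 G.Adj (gdeg G)) (h2 : ∀ v, gdeg G v = 2) :
    3 ∣ Nat.card V := by
  classical
  have hsym : ∀ p q, G.Adj p q → G.Adj q p := fun p q h => h.symm
  have htrans : ∀ a v b, G.Adj a v → G.Adj v b → a ≠ b → G.Adj a b := by
    intro a v b hav hvb hab
    obtain ⟨c, hcv, ha⟩ := exists_other_nbr (h2 a) hav
    have hac := (ha c).2 (Or.inr rfl)
    by_contra hnot
    exact hs.forbid c a v b hac.symm hav hvb hcv (by rintro rfl; exact hnot hac) hab
      (by simp [h2]) (by simp [h2]) (by simp [h2])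
  let S : Setoid V :=
    { r := fun a b => a = b ∨ G.Adj a b
      iseqv :=
        { refl := fun a => Or.inl rfl
          symm := by
            rintro a b (h | h)
            · exact Or.inl h.symm
            · exact Or.inr h.symm
          trans := by
            rintro a b c (rfl | h) (rfl | h')
            · exact Or.inl rfl
            · exact Or.inr h'
            · exact Or.inr h
            · by_cases hac : a = c
              · exact Or.inl hac
              · exact Or.inr (htrans a b c h h' hac) } }
  have := Fintype.ofFinite V
  have hfib : ∀ q ∈ (Finset.univ : Finset (Quotient S)),
      (Finset.univ.filter fun v : V => Quotient.mk S v = q).card = 3 := by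
    intro q _
    induction q using Quotient.inductionOn with
    | h a =>
      obtain ⟨y, z, hyz, ha⟩ := exists_nbrs_of_gdeg_two (h2 a)
      have hay := ((ha y).2 (Or.inl rfl)).ne
      have haz := ((ha z).2 (Or.inr rfl)).ne
      have : (Finset.univ.filter fun v : V => Quotient.mk S v = Quotient.mk S a) = {a, y, z} := by
        ext v
        have hr : Quotient.mk S v = Quotient.mk S a ↔ (v = a ∨ G.Adj v a) := Quotient.eq
        have hva : G.Adj v a ↔ G.Adj a v := G.adj_comm v a
        simp [hr, hva, ha]
      rw [this, Finset.card_eq_three]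
      exact ⟨a, y, z, hay, haz, hyz, rfl⟩
  have hc := Finset.card_eq_sum_card_fiberwise (s := (Finset.univ : Finset V))
    (t := (Finset.univ : Finset (Quotient S))) (f := Quotient.mk S) (fun _ _ => by simp)
  rw [Finset.sum_congr rfl hfib] at hc
  rw [Nat.card_eq_fintype_card, ← Finset.card_univ, hc]
  simp

end lower

lemma gdeg_eq_degree [Fintype V] (G : SimpleGraph V) [DecidableRel G.Adj] (v : V) :
    gdeg G v = G.degree v := by
  rw [gdeg, Set.ncard_eq_toFinset_card', SimpleGraph.degree, SimpleGraph.neighborFinset]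

lemma sum_gdeg [Fintype V] (G : SimpleGraph V) : ∑ v, gdeg G v = 2 * G.edgeSet.ncard := by
  classical
  have := G.sum_degrees_eq_twice_card_edges
  rw [← SimpleGraph.coe_edgeFinset, Set.ncard_coe_finset, ← this]
  exact Finset.sum_congr rfl fun v _ => gdeg_eq_degree G v

/-! ### The lower bound -/

lemma lower_bound [Fintype V] {G : SimpleGraph V} (hs : Sat4 G.Adj (gdeg G))
    (hcard : 4 ≤ Fintype.card V) (h3 : ¬ 3 ∣ Fintype.card V) :
    Fintype.card V + 1 ≤ G.edgeSet.ncard := by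
  classical
  have hcard' : 4 ≤ Nat.card V := by rwa [Nat.card_eq_fintype_card]
  have : Nonempty V := Fintype.card_pos_iff.1 (by omega)
  obtain ⟨u, hu⟩ := Finite.exists_max (gdeg G)
  have hpos := gdeg_pos_of_sat hs hcard' hu
  have hu2 := two_le_max hs hcard' hu hpos
  have hsum := sum_gdeg G
  -- By parity of the degree sum, exceeding `2n` is enough.
  suffices 2 * Fintype.card V < ∑ v, gdeg G v by omega
  by_cases hleaf : ∃ x, gdeg G x = 1
  · obtain ⟨x, hdx⟩ := hleaf
    have hxu : x ≠ u := by rintro rfl; omega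
    have htwo : ∀ v, v ≠ x → 2 ≤ gdeg G v := fun v hv => by
      have h1 := hpos v
      have h2 : gdeg G v ≠ 1 := fun h => hv (leaf_unique hs hu hu2 h hdx)
      omega
    have hadj := leaf_adj_max hs hu hu2 hdx hxu
    obtain ⟨u', hx⟩ := exists_nbr_of_gdeg_one hdx
    obtain rfl := (hx u).1 hadj
    have h3u : 3 ≤ gdeg G u := by
      by_contra hcon
      obtain ⟨a, hax, hua⟩ := exists_other_nbr (by omega : gdeg G u = 2) hadj.symm
      have hda : gdeg G a = gdeg G u := by
        have := htwo a hax
        have := hu a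
        omega
      have := leaf_adj_max (u := a) hs (by simpa [hda] using hu) (by omega) hdx hax.symm
      exact ((hua a).2 (Or.inr rfl)).ne ((hx a).1 this).symm
    have hmem : u ∈ Finset.univ.erase x := by simp [hxu.symm]
    have hrest : ∀ v ∈ (Finset.univ.erase x).erase u, 2 ≤ gdeg G v := fun v hv =>
      htwo v (by simp at hv; exact hv.2)
    have hcc : ((Finset.univ.erase x).erase u).card = Fintype.card V - 2 := by
      rw [Finset.card_erase_of_mem hmem, Finset.card_erase_of_mem (Finset.mem_univ x),
        Finset.card_univ]
      omega
    have hge : ((Finset.univ.erase x).erase u).card * 2 ≤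
        ∑ v ∈ (Finset.univ.erase x).erase u, gdeg G v := by
      simpa using Finset.card_nsmul_le_sum _ _ _ hrest
    rw [← Finset.add_sum_erase _ _ (Finset.mem_univ x), ← Finset.add_sum_erase _ _ hmem, hdx]
    by_contra hcon
    refine no_paw hs (by omega) hx hdx fun v hvx hvu => ?_
    have hv : v ∈ (Finset.univ.erase x).erase u := by simp [hvx, hvu]
    have hle : ((Finset.univ.erase x).erase u).card * 2 <
        ∑ v ∈ (Finset.univ.erase x).erase u, gdeg G v ∨ gdeg G v = 2 := by
      by_contra h
      push Not at h
      have := Finset.sum_lt_sum hrest ⟨v, hv, lt_of_le_of_ne (hrest v hv) h.2.symm⟩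
      simp at this h
      omega
    omega
  · push Not at hleaf
    have htwo : ∀ v, 2 ≤ gdeg G v := fun v => by
      have h1 := hpos v
      have h2 := hleaf v
      omega
    have hne : ∃ v, gdeg G v ≠ 2 := by
      by_contra hcon
      push Not at hcon
      have := three_dvd_of_two_regular hs hcon
      rw [Nat.card_eq_fintype_card] at this
      exact h3 this
    obtain ⟨v, hv⟩ := hne
    have := Finset.sum_lt_sum (s := Finset.univ) (fun v _ => htwo v)
      ⟨v, Finset.mem_univ v, lt_of_le_of_ne (htwo v) hv.symm⟩
    simp at this
    omega

/-! ### The construction -/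

lemma gdeg_iso [Fintype V] {W : Type*} [Fintype W] {G : SimpleGraph V} {G' : SimpleGraph W}
    (f : G ≃g G') (v : V) : gdeg G' (f v) = gdeg G v := by
  classical
  rw [gdeg_eq_degree, gdeg_eq_degree]
  exact f.degree_eq v

lemma Mono4.of_map {W : Type*} {A : V → V → Prop} {d : V → ℕ} {A' : W → W → Prop} {d' : W → ℕ}
    (f : V → W) (hf : Function.Injective f) (hA : ∀ a b, A a b → A' (f a) (f b))
    (hd : ∀ a, d' (f a) = d a) (h : Mono4 A d) : Mono4 A' d' := by
  obtain ⟨a, b, c, e, h1, h2, h3, h13, h14, h24, m1, m2, m3⟩ := h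
  exact ⟨f a, f b, f c, f e, hA _ _ h1, hA _ _ h2, hA _ _ h3, hf.ne h13, hf.ne h14, hf.ne h24,
    by simpa [hd], by simpa [hd], by simpa [hd]⟩

lemma Mono4.new_of_map {W : Type*} {A : V → V → Prop} {d : V → ℕ} {A' : W → W → Prop}
    {d' : W → ℕ} (f : V → W) (hf : Function.Injective f) (hA : ∀ a b, A a b → A' (f a) (f b))
    (hd : ∀ a, d' (f a) = d a) {u v : V} (h : Mono4 (NewAdj A u v) (newDeg d u v)) :
    Mono4 (NewAdj A' (f u) (f v)) (newDeg d' (f u) (f v)) := by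
  refine h.of_map f hf ?_ ?_
  · rintro a b (h | ⟨rfl, rfl⟩ | ⟨rfl, rfl⟩)
    · exact Or.inl (hA _ _ h)
    · exact Or.inr (Or.inl ⟨rfl, rfl⟩)
    · exact Or.inr (Or.inr ⟨rfl, rfl⟩)
  · intro a
    have h1 : f a = f u ↔ a = u := hf.eq_iff
    have h2 : f a = f v ↔ a = v := hf.eq_iff
    unfold newDeg
    grind

lemma Sat4.of_iso [Fintype V] {W : Type*} [Fintype W] {G : SimpleGraph V} {G' : SimpleGraph W}
    (f : G ≃g G') (h : Sat4 G'.Adj (gdeg G')) : Sat4 G.Adj (gdeg G) := by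
  refine ⟨fun hm => h.1 (hm.of_map f f.injective (fun a b => f.map_adj_iff.2) (gdeg_iso f)), ?_⟩
  intro u v huv hn
  have := h.2 (f u) (f v) (f.injective.ne huv) (fun h' => hn (f.map_adj_iff.1 h'))
  simpa using this.new_of_map f.symm f.symm.injective (fun a b => f.symm.map_adj_iff.2)
    (gdeg_iso f.symm)

/-- `H` together with `q` disjoint triangles; `(k, i)` is the `i`-th vertex of the
`k`-th triangle. -/
def withTriangles {U : Type*} (H : SimpleGraph U) (q : ℕ) : SimpleGraph (U ⊕ Fin q × Fin 3) where
  Adj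
    | .inl a, .inl b => H.Adj a b
    | .inr a, .inr b => a.1 = b.1 ∧ a.2 ≠ b.2
    | _, _ => False
  symm := ⟨by
    rintro (a | a) (b | b) h
    · exact h.symm
    · exact h
    · exact h
    · exact ⟨h.1.symm, h.2.symm⟩⟩
  loopless := ⟨by
    rintro (a | a) h
    · exact H.irrefl h
    · exact h.2 rfl⟩

section triangles
variable {U : Type*} {H : SimpleGraph U} {q : ℕ}

lemma gdeg_inl (a : U) : gdeg (withTriangles H q) (.inl a) = gdeg H a := by
  have : (withTriangles H q).neighborSet (.inl a) = Sum.inl '' H.neighborSet a := by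
    ext (b | b) <;> simp [withTriangles]
  rw [gdeg, this, Set.ncard_image_of_injective _ Sum.inl_injective, gdeg]

lemma gdeg_inr (a : Fin q × Fin 3) : gdeg (withTriangles H q) (.inr a) = 2 := by
  obtain ⟨k, r⟩ := a
  have : (withTriangles H q).neighborSet (.inr (k, r)) =
      {.inr (k, r + 1), .inr (k, r + 2)} := by
    ext (b | ⟨k', r'⟩)
    · simp [withTriangles]
    · have : ∀ r r' : Fin 3, r ≠ r' ↔ (r' = r + 1 ∨ r' = r + 2) := by decide
      simp [withTriangles, this r r', eq_comm (a := k)]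
      tauto
  rw [gdeg, this, Set.ncard_pair]
  have : ∀ r : Fin 3, r + 1 ≠ r + 2 := by decide
  simp [this r]

lemma two_le_gdeg_withTriangles (h2 : ∀ v, 2 ≤ gdeg H v) (w : U ⊕ Fin q × Fin 3) :
    2 ≤ gdeg (withTriangles H q) w := by
  rcases w with a | a
  · rw [gdeg_inl]; exact h2 a
  · rw [gdeg_inr]

/-- An edge from a triangle `x, y, z` to an outside vertex `w` at `z` creates the path `x, y, z, w` with
degrees `2, 2, 3, deg w + 1`. -/
lemma mono4_triangle_edge (h2 : ∀ v, 2 ≤ gdeg H v) (k : Fin q) (r : Fin 3)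
    (w : U ⊕ Fin q × Fin 3) (hne : .inr (k, r) ≠ w)
    (hn : ¬ (withTriangles H q).Adj (.inr (k, r)) w) (A : U ⊕ Fin q × Fin 3 → _ → Prop)
    (hA : ∀ a b, (withTriangles H q).Adj a b → A a b) (hA' : A (.inr (k, r)) w)
    (d : U ⊕ Fin q × Fin 3 → ℕ)
    (hd : d = newDeg (gdeg (withTriangles H q)) (.inr (k, r)) w) : Mono4 A d := by
  have hr : ∀ r : Fin 3, r + 1 ≠ r + 2 ∧ r + 2 ≠ r ∧ r + 1 ≠ r := by decide
  obtain ⟨r1, r2, r3⟩ := hr r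
  have a1 : (withTriangles H q).Adj (.inr (k, r + 1)) (.inr (k, r + 2)) := ⟨rfl, r1⟩
  have a2 : (withTriangles H q).Adj (.inr (k, r + 2)) (.inr (k, r)) := ⟨rfl, r2⟩
  have a3 : (withTriangles H q).Adj (.inr (k, r + 1)) (.inr (k, r)) := ⟨rfl, r3⟩
  have n1 : .inr (k, r + 1) ≠ w := by rintro rfl; exact hn a3.symm
  have n2 : .inr (k, r + 2) ≠ w := by rintro rfl; exact hn a2.symm
  refine ⟨_, _, _, _, hA _ _ a1, hA _ _ a2, hA', a3.ne, n1, n2, ?_, ?_, ?_⟩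
  · simp [hd, newDeg, gdeg_inr, n1, n2, r2, r3]
  · simp [hd, newDeg, gdeg_inr, n2, r2]
  · simpa [hd, newDeg, gdeg_inr] using two_le_gdeg_withTriangles h2 w

lemma sat4_withTriangles (h : Sat4 H.Adj (gdeg H)) (h2 : ∀ v, 2 ≤ gdeg H v) :
    Sat4 (withTriangles H q).Adj (gdeg (withTriangles H q)) := by
  constructor
  · rintro ⟨a, b, c, e, h1, h2, h3, h13, h14, h24, m1, m2, m3⟩
    rcases a with a | ⟨k, a⟩ <;> rcases b with b | ⟨k', b⟩ <;> try exact h1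
    all_goals rcases c with c | ⟨k'', c⟩ <;> try exact h2
    all_goals rcases e with e | ⟨k''', e⟩ <;> try exact h3
    · rw [gdeg_inl, gdeg_inl] at m1 m2 m3
      exact h.1 ⟨a, b, c, e, h1, h2, h3, by simpa using h13, by simpa using h14,
        by simpa using h24, m1, m2, m3⟩
    · obtain ⟨rfl, h1⟩ := h1
      obtain ⟨rfl, h2⟩ := h2
      obtain ⟨rfl, h3⟩ := h3
      simp only [ne_eq, Sum.inr.injEq, Prod.mk.injEq, true_and] at h1 h2 h3 h13 h14 h24
      omega
  · rintro (u | ⟨k, r⟩) v huv hn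
    · rcases v with v | ⟨k, r⟩
      · exact (h.2 u v (by simpa using huv) hn).new_of_map Sum.inl Sum.inl_injective
          (fun _ _ h => h) gdeg_inl
      · refine mono4_triangle_edge h2 k r (.inl u) (by simp) (fun h => h)
          (NewAdj _ (.inl u) (.inr (k, r))) (fun _ _ => Or.inl) (Or.inr (Or.inr ⟨rfl, rfl⟩)) _ ?_
        funext w
        unfold newDeg
        grind
    · exact mono4_triangle_edge h2 k r v huv hn
        (NewAdj _ (.inr (k, r)) v) (fun _ _ => Or.inl) (Or.inr (Or.inl ⟨rfl, rfl⟩)) _ rfl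

lemma ncard_edgeSet_withTriangles [Fintype U] :
    (withTriangles H q).edgeSet.ncard = H.edgeSet.ncard + 3 * q := by
  have h1 := sum_gdeg (withTriangles H q)
  have h2 := sum_gdeg H
  rw [Fintype.sum_sum_type] at h1
  simp only [gdeg_inl, gdeg_inr, h2] at h1
  simp at h1
  omega

lemma exists_saturated [Fintype U] (h : Sat4 H.Adj (gdeg H)) (h2 : ∀ v, 2 ≤ gdeg H v) {n : ℕ}
    (hn : n = Fintype.card U + 3 * q) (hH : H.edgeSet.ncard = Fintype.card U + 1) :
    ∃ G : SimpleGraph (Fin n), KSaturated 4 G ∧ G.edgeSet.ncard = n + 1 := by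
  classical
  have e : Fin n ≃ U ⊕ Fin q × Fin 3 := Fintype.equivOfCardEq (by simp [hn]; ring)
  let f : (withTriangles H q).comap e ≃g withTriangles H q := SimpleGraph.Iso.comap e _
  refine ⟨(withTriangles H q).comap e, (kSaturated_iff _).2 ((sat4_withTriangles h h2).of_iso f), ?_⟩
  have h1 := sum_gdeg (withTriangles H q)
  have h3 := sum_gdeg ((withTriangles H q).comap e)
  rw [← f.toEquiv.sum_comp] at h1
  have : ∀ v, gdeg (withTriangles H q) (f.toEquiv v) = gdeg _ v := gdeg_iso f
  simp only [this] at h1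
  rw [ncard_edgeSet_withTriangles] at h1
  omega

end triangles

lemma newDeg_eq [DecidableEq V] (d : V → ℕ) (u v : V) :
    newDeg d u v = fun w => d w + if w = u ∨ w = v then 1 else 0 := by
  funext w
  unfold newDeg
  congr

/-- The complete graph on four vertices minus the edge `01`. -/
def diamond : SimpleGraph (Fin 4) where
  Adj a b := a ≠ b ∧ (2 ≤ a ∨ 2 ≤ b)
  symm := ⟨by decide⟩
  loopless := ⟨by decide⟩

/-- Two triangles sharing the vertex `0`. -/
def bowtie : SimpleGraph (Fin 5) where
  Adj a b := a ≠ b ∧ (a = 0 ∨ b = 0 ∨ (a ≤ 2 ∧ b ≤ 2) ∨ (3 ≤ a ∧ 3 ≤ b))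
  symm := ⟨by decide⟩
  loopless := ⟨by decide⟩

instance : DecidableRel diamond.Adj := fun a b =>
  inferInstanceAs (Decidable (a ≠ b ∧ (2 ≤ a ∨ 2 ≤ b)))

instance : DecidableRel bowtie.Adj := fun a b =>
  inferInstanceAs (Decidable (a ≠ b ∧ (a = 0 ∨ b = 0 ∨ (a ≤ 2 ∧ b ≤ 2) ∨ (3 ≤ a ∧ 3 ≤ b))))

lemma gdeg_diamond : gdeg diamond = ![2, 2, 3, 3] := by
  funext v
  rw [gdeg_eq_degree]
  revert v
  decide

lemma gdeg_bowtie : gdeg bowtie = ![4, 2, 2, 2, 2] := by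
  funext v
  rw [gdeg_eq_degree]
  revert v
  decide

set_option maxRecDepth 10000 in
lemma sat4_diamond : Sat4 diamond.Adj (gdeg diamond) := by
  rw [gdeg_diamond]
  unfold Sat4
  simp only [newDeg_eq, Mono4, NewAdj]
  decide +kernel

set_option maxRecDepth 10000 in
lemma sat4_bowtie : Sat4 bowtie.Adj (gdeg bowtie) := by
  rw [gdeg_bowtie]
  unfold Sat4
  simp only [newDeg_eq, Mono4, NewAdj]
  decide +kernel

theorem stmt_18 (n : ℕ) (hn : 4 ≤ n) (hmod : n % 3 = 1 ∨ n % 3 = 2) :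
    hSat n 4 = n + 1 := by
  have hex : ∃ G : SimpleGraph (Fin n), KSaturated 4 G ∧ G.edgeSet.ncard = n + 1 := by
    rcases hmod with h | h
    · refine exists_saturated (H := diamond) (q := (n - 4) / 3) sat4_diamond ?_ ?_ ?_
      · rw [gdeg_diamond]; decide
      · simp; omega
      · have := sum_gdeg diamond
        rw [gdeg_diamond] at this
        simp [Fin.sum_univ_succ] at this ⊢
        omega
    · refine exists_saturated (H := bowtie) (q := (n - 5) / 3) sat4_bowtie ?_ ?_ ?_
      · rw [gdeg_bowtie]; decide
      · simp; omega
      · have := sum_gdeg bowtie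
        rw [gdeg_bowtie] at this
        simp [Fin.sum_univ_succ] at this ⊢
        omega
  refine le_antisymm (Nat.sInf_le hex) (le_csInf ⟨_, hex⟩ ?_)
  rintro m ⟨G, hG, rfl⟩
  have := lower_bound ((kSaturated_iff G).1 hG) (by simpa using hn) (by simp; omega)
  simpa using this
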